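/- Let α, β ∈ (1,2), N_x, N_y ≥ 1, and η_α, η_β > 0. Then the matrix J_{α,β} = η_α (I_{N_y} ⊗ A_α) + η_β (A_β ⊗ I_{N_x}), where A_α is of size N_x×N_x and A_β of size N_y×N_y, is symmetric positive definite. -/

import Mathlib

open Matrix Kronecker

/-- The fourth-order coefficients `s_k^{(γ)}`. -/
noncomputable def sCoef (γ : ℝ) (k : ℤ) : ℝ :=
  ((-1 : ℝ) ^ k * Real.Gamma (γ + 1) /
      (Real.Gamma (γ / 2 - k + 1) * Real.Gamma (γ / 2 + k + 1))) *
    (1 + γ * (γ + 1) * (γ + 2) / (6 * (γ - 2 * k + 2) * (γ + 2 * k + 2)))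

/-- The `N×N` symmetric Toeplitz matrix `A_γ` with `(i,j)` entry `s_{i-j}^{(γ)}`. -/
noncomputable def Amat (γ : ℝ) (N : ℕ) : Matrix (Fin N) (Fin N) ℝ :=
  fun i j => sCoef γ ((i : ℤ) - (j : ℤ))

/-!
Let `g_k` be the coefficients of the fractional centered difference of order `γ`, and put
`f k = (γ / 2 + k) g_k`. The recurrence `(γ / 2 + k + 1) g_{k+1} = (k - γ / 2) g_k` says that
`γ g_k = f k - f (k + 1)`. For `0 < γ < 2` we have `g_0 > 0 > g_k` for `k ≠ 0`, so `f > 0` on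
`k ≤ 0` and `f < 0` on `k > 0`; every row sum of the Toeplitz matrix `G_n` of `g` telescopes to a
positive number. Hence `G_n` is strictly diagonally dominant, and positive definite by Gershgorin.

The same recurrence turns the rational correction factor in `s_k` into a second difference:
`s_k = g_k + γ / 24 * (2 g_k - g_{k-1} - g_{k+1})`. The Toeplitz matrix of a negated second
difference is the compression `Dᴴ G_{n+1} D` by the difference matrix `D`, so it is positive
semidefinite, and `A_γ = G_n + γ / 24 • Dᴴ G_{n+1} D` is positive definite.
-/

section PositiveDefinite

open scoped ComplexOrder

variable {𝕜 m n : Type*} [RCLike 𝕜]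

theorem posDef_of_sum_row_lt_diag [Fintype n] [DecidableEq n] {A : Matrix n n 𝕜}
    (hA : A.IsHermitian)
    (hdiag : ∀ k, ∑ j ∈ Finset.univ.erase k, ‖A k j‖ < RCLike.re (A k k)) : A.PosDef := by
  refine hA.posDef_iff_eigenvalues_pos.mpr fun i => ?_
  have heig : Module.End.HasEigenvalue (Matrix.toLin' A) (hA.eigenvalues i : 𝕜) := by
    rw [Module.End.hasEigenvalue_iff_mem_spectrum, Matrix.spectrum_toLin',
      hA.spectrum_eq_image_range]
    exact Set.mem_image_of_mem _ (Set.mem_range_self i)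
  obtain ⟨k, hk⟩ := eigenvalue_mem_ball heig
  have hre : RCLike.re (A k k) - hA.eigenvalues i ≤ ‖A k k - hA.eigenvalues i‖ := by
    simpa using RCLike.re_le_norm (A k k - hA.eigenvalues i)
  linarith [hdiag k, mem_closedBall_iff_norm'.mp hk]

theorem posDef_of_offDiag_nonpos_of_sum_row_pos [Fintype n] {A : Matrix n n ℝ}
    (hA : A.IsHermitian) (hoff : ∀ i j, i ≠ j → A i j ≤ 0) (hrow : ∀ i, 0 < ∑ j, A i j) :
    A.PosDef := by
  classical
  refine posDef_of_sum_row_lt_diag hA fun k => ?_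
  have hnorm : ∑ j ∈ Finset.univ.erase k, ‖A k j‖ = -∑ j ∈ Finset.univ.erase k, A k j := by
    rw [← Finset.sum_neg_distrib]
    exact Finset.sum_congr rfl fun j hj =>
      Real.norm_of_nonpos (hoff k j (Finset.ne_of_mem_erase hj).symm)
  have hsplit := Finset.add_sum_erase Finset.univ (A k) (Finset.mem_univ k)
  rw [hnorm, RCLike.re_to_real]
  linarith [hrow k]

theorem posDef_smul_one_kronecker_add_smul_kronecker_one [Finite m] [Finite n]
    [DecidableEq m] [DecidableEq n] {A : Matrix n n 𝕜} {B : Matrix m m 𝕜}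
    (hA : A.PosDef) (hB : B.PosDef) {a b : ℝ} (ha : 0 < a) (hb : 0 < b) :
    (a • ((1 : Matrix m m 𝕜) ⊗ₖ A) + b • (B ⊗ₖ (1 : Matrix n n 𝕜))).PosDef :=
  ((Matrix.PosDef.one.kronecker hA).smul ha).add ((hB.kronecker Matrix.PosDef.one).smul hb)

end PositiveDefinite

section Toeplitz

variable {R : Type*}

/-- The `n × n` Toeplitz matrix with `(i, j)` entry `a (i - j)`. -/
def toeplitz (a : ℤ → R) (n : ℕ) : Matrix (Fin n) (Fin n) R :=
  Matrix.of fun i j => a ((i : ℤ) - j)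

theorem isHermitian_toeplitz [Star R] {a : ℤ → R} (ha : ∀ k, a (-k) = star (a k)) (n : ℕ) :
    (toeplitz a n).IsHermitian :=
  Matrix.IsHermitian.ext fun i j => by
    simp only [toeplitz, Matrix.of_apply, ← ha, neg_sub]

theorem posDef_toeplitz_of_nonpos_of_sum_pos {a : ℤ → ℝ} {n : ℕ} (heven : a.Even)
    (hneg : ∀ k, k ≠ 0 → a k ≤ 0) (hsum : ∀ i < n, 0 < ∑ j ∈ Finset.range n, a ((i : ℤ) - j)) :
    (toeplitz a n).PosDef := by
  refine posDef_of_offDiag_nonpos_of_sum_row_pos (isHermitian_toeplitz heven n)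
    (fun i j hij => hneg _ ?_) fun i => ?_
  · simpa [sub_eq_zero, Fin.ext_iff] using hij
  · simpa [toeplitz, Finset.sum_range] using hsum i i.isLt

variable [Ring R]

/-- The negated second difference of a two-sided sequence, i.e. the discrete `-d²/dx²`. -/
def negSecondDiff (a : ℤ → R) (k : ℤ) : R :=
  2 * a k - a (k - 1) - a (k + 1)

variable (R) in
/-- The matrix of the backward difference `x ↦ (x₀, x₁ - x₀, …, x_{n-1} - x_{n-2}, -x_{n-1})` of a
vector extended by zero at both ends. -/
def diffMatrix (n : ℕ) : Matrix (Fin (n + 1)) (Fin n) R :=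
  (1 : Matrix (Fin (n + 1)) (Fin (n + 1)) R).submatrix id Fin.castSucc -
    (1 : Matrix (Fin (n + 1)) (Fin (n + 1)) R).submatrix id Fin.succ

theorem mul_diffMatrix {m : Type*} {n : ℕ} (M : Matrix m (Fin (n + 1)) R) :
    M * diffMatrix R n = M.submatrix id Fin.castSucc - M.submatrix id Fin.succ := by
  rw [diffMatrix, Matrix.mul_sub]
  exact congrArg₂ _ (Matrix.mul_submatrix_one (Equiv.refl _) _ M)
    (Matrix.mul_submatrix_one (Equiv.refl _) _ M)

theorem conjTranspose_diffMatrix_mul [StarRing R] {m : Type*} {n : ℕ}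
    (M : Matrix (Fin (n + 1)) m R) :
    (diffMatrix R n)ᴴ * M = M.submatrix Fin.castSucc id - M.submatrix Fin.succ id := by
  rw [← Matrix.conjTranspose_conjTranspose M, ← Matrix.conjTranspose_mul, mul_diffMatrix]
  simp only [Matrix.conjTranspose_sub, Matrix.conjTranspose_submatrix]

theorem conjTranspose_diffMatrix_mul_toeplitz_mul_diffMatrix [StarRing R] (a : ℤ → R) (n : ℕ) :
    (diffMatrix R n)ᴴ * toeplitz a (n + 1) * diffMatrix R n = toeplitz (negSecondDiff a) n := by
  ext i j
  have hprev : (i : ℤ) - (j + 1) = i - j - 1 := by ring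
  have hnext : (i : ℤ) + 1 - j = i - j + 1 := by ring
  simp only [mul_diffMatrix, conjTranspose_diffMatrix_mul, toeplitz, negSecondDiff,
    Matrix.sub_apply, Matrix.submatrix_apply, Matrix.of_apply, id, Fin.val_castSucc, Fin.val_succ,
    Nat.cast_add_one, add_sub_add_right_eq_sub, hprev, hnext, two_mul]
  abel

theorem posSemidef_toeplitz_negSecondDiff [PartialOrder R] [StarRing R] {a : ℤ → R} {n : ℕ}
    (ha : (toeplitz a (n + 1)).PosSemidef) : (toeplitz (negSecondDiff a) n).PosSemidef :=
  conjTranspose_diffMatrix_mul_toeplitz_mul_diffMatrix a n ▸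
    ha.conjTranspose_mul_mul_same (diffMatrix R n)

end Toeplitz

section FracCentralCoef

/-- The coefficient `g_k` of the fractional centered difference of order `γ`, the second-order
approximation which `sCoef` corrects to fourth order. -/
noncomputable def fracCentralCoef (γ : ℝ) (k : ℤ) : ℝ :=
  (-1 : ℝ) ^ k * Real.Gamma (γ + 1) /
    (Real.Gamma (γ / 2 - k + 1) * Real.Gamma (γ / 2 + k + 1))

-- `Real.Gamma` is `0` at its poles, so `(Real.Gamma s)⁻¹` is the entire function `1 / Γ`.
theorem inv_Gamma_eq_self_mul_inv_Gamma_add_one (s : ℝ) :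
    (Real.Gamma s)⁻¹ = s * (Real.Gamma (s + 1))⁻¹ := by
  rcases eq_or_ne s 0 with rfl | hs
  · simp
  · rw [Real.Gamma_add_one hs, mul_inv, mul_inv_cancel_left₀ hs]

variable (γ : ℝ)

theorem even_fracCentralCoef : (fracCentralCoef γ).Even := by
  intro k
  have hsign : (-1 : ℝ) ^ (-k) = (-1) ^ k := by
    rw [_root_.zpow_neg, ← _root_.inv_zpow, inv_neg_one]
  simp only [fracCentralCoef, hsign, Int.cast_neg, sub_neg_eq_add, ← sub_eq_add_neg]
  rw [mul_comm (Real.Gamma (γ / 2 + k + 1))]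

theorem add_mul_fracCentralCoef_add_one (k : ℤ) :
    (γ / 2 + k + 1) * fracCentralCoef γ (k + 1) = (k - γ / 2) * fracCentralCoef γ k := by
  have hinv (j : ℤ) : fracCentralCoef γ j = (-1) ^ j * Real.Gamma (γ + 1) *
      ((Real.Gamma (γ / 2 - j + 1))⁻¹ * (Real.Gamma (γ / 2 + j + 1))⁻¹) := by
    rw [fracCentralCoef, div_eq_mul_inv, mul_inv]
  have hsign : (-1 : ℝ) ^ (k + 1) = -(-1) ^ k := by
    rw [zpow_add_one₀ (by norm_num), mul_neg_one]
  have hpred : γ / 2 - (k + 1 : ℤ) + 1 = γ / 2 - k := by push_cast; ring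
  rw [hinv, hinv, hsign, hpred, Int.cast_add, Int.cast_one, ← add_assoc,
    inv_Gamma_eq_self_mul_inv_Gamma_add_one (γ / 2 - k),
    inv_Gamma_eq_self_mul_inv_Gamma_add_one (γ / 2 + k + 1)]
  ring

theorem mul_sum_range_fracCentralCoef (i : ℤ) (n : ℕ) :
    γ * ∑ j ∈ Finset.range n, fracCentralCoef γ (i - j) =
      (γ / 2 + (i - n + 1 : ℤ)) * fracCentralCoef γ (i - n + 1) -
        (γ / 2 + (i + 1 : ℤ)) * fracCentralCoef γ (i + 1) := by
  let f (j : ℕ) : ℝ := (γ / 2 + (i - j + 1 : ℤ)) * fracCentralCoef γ (i - j + 1)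
  have hstep (j : ℕ) : γ * fracCentralCoef γ (i - j) = f (j + 1) - f j := by
    have hrec := add_mul_fracCentralCoef_add_one γ (i - j)
    simp only [f, Nat.cast_add_one, sub_add_eq_sub_sub, sub_add_cancel]
    push_cast at hrec ⊢
    linarith
  rw [Finset.mul_sum, Finset.sum_congr rfl fun j _ => hstep j, Finset.sum_range_sub]
  simp only [f, Nat.cast_zero, sub_zero]

variable {γ}

theorem sCoef_eq_fracCentralCoef_add {k : ℤ} (hadd : γ + 2 * k + 2 ≠ 0)
    (hsub : γ - 2 * k + 2 ≠ 0) :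
    sCoef γ k = fracCentralCoef γ k + γ / 24 * negSecondDiff (fracCentralCoef γ) k := by
  have hnext : fracCentralCoef γ (k + 1) =
      (2 * k - γ) / (γ + 2 * k + 2) * fracCentralCoef γ k := by
    field_simp
    linarith [add_mul_fracCentralCoef_add_one γ k]
  have hprev : fracCentralCoef γ (k - 1) =
      -(γ + 2 * k) / (γ - 2 * k + 2) * fracCentralCoef γ k := by
    have hrec := add_mul_fracCentralCoef_add_one γ (k - 1)
    rw [sub_add_cancel] at hrec
    push_cast at hrec
    field_simp
    linarith
  rw [negSecondDiff, hnext, hprev]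
  change fracCentralCoef γ k * _ = _
  field_simp
  ring

theorem fracCentralCoef_zero_pos (hγ : -1 < γ) : 0 < fracCentralCoef γ 0 := by
  have hnum : 0 < Real.Gamma (γ + 1) := Real.Gamma_pos_of_pos (by linarith)
  have hden : 0 < Real.Gamma (γ / 2 + 1) := Real.Gamma_pos_of_pos (by linarith)
  simpa [fracCentralCoef] using div_pos hnum (mul_pos hden hden)

theorem fracCentralCoef_neg_of_pos (hγ : γ ∈ Set.Ioo 0 2) {k : ℤ} (hk : 0 < k) :
    fracCentralCoef γ k < 0 := by
  obtain ⟨hγ₀, hγ₂⟩ := hγ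
  have hstep {j : ℤ} (hj : 0 ≤ j) (hneg : (j - γ / 2) * fracCentralCoef γ j < 0) :
      fracCentralCoef γ (j + 1) < 0 := by
    have hj' : (0 : ℝ) ≤ j := mod_cast hj
    rw [← add_mul_fracCentralCoef_add_one] at hneg
    exact neg_of_mul_neg_right hneg (by linarith)
  obtain ⟨n, rfl⟩ := Int.exists_add_of_le hk
  induction n with
  | zero =>
    refine hstep le_rfl (mul_neg_of_neg_of_pos ?_ (fracCentralCoef_zero_pos (by linarith)))
    simpa using hγ₀
  | succ n ih =>
    rw [Nat.cast_add_one, ← add_assoc]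
    refine hstep (by omega) (mul_neg_of_pos_of_neg ?_ (ih (by omega)))
    push_cast
    linarith

theorem fracCentralCoef_neg_of_ne_zero (hγ : γ ∈ Set.Ioo 0 2) {k : ℤ} (hk : k ≠ 0) :
    fracCentralCoef γ k < 0 := by
  rcases hk.lt_or_gt with hk | hk
  · exact even_fracCentralCoef γ k ▸ fracCentralCoef_neg_of_pos hγ (neg_pos.mpr hk)
  · exact fracCentralCoef_neg_of_pos hγ hk

theorem add_mul_fracCentralCoef_pos_of_nonpos (hγ : γ ∈ Set.Ioo 0 2) {k : ℤ} (hk : k ≤ 0) :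
    0 < (γ / 2 + k) * fracCentralCoef γ k := by
  have ⟨hγ₀, hγ₂⟩ := hγ
  rcases hk.eq_or_lt with rfl | hk
  · exact mul_pos (by simpa using hγ₀) (fracCentralCoef_zero_pos (by linarith))
  · have : (k : ℝ) ≤ -1 := mod_cast Int.le_sub_one_of_lt hk
    exact mul_pos_of_neg_of_neg (by linarith) (fracCentralCoef_neg_of_ne_zero hγ hk.ne)

theorem add_mul_fracCentralCoef_neg_of_pos (hγ : γ ∈ Set.Ioo 0 2) {k : ℤ} (hk : 0 < k) :
    (γ / 2 + k) * fracCentralCoef γ k < 0 :=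
  mul_neg_of_pos_of_neg (add_pos (half_pos hγ.1) (Int.cast_pos.mpr hk))
    (fracCentralCoef_neg_of_pos hγ hk)

theorem sum_range_fracCentralCoef_pos (hγ : γ ∈ Set.Ioo 0 2) {i n : ℕ} (hi : i < n) :
    0 < ∑ j ∈ Finset.range n, fracCentralCoef γ ((i : ℤ) - j) := by
  refine pos_of_mul_pos_right ?_ hγ.1.le
  rw [mul_sum_range_fracCentralCoef, sub_pos]
  exact (add_mul_fracCentralCoef_neg_of_pos hγ (by omega)).trans
    (add_mul_fracCentralCoef_pos_of_nonpos hγ (by omega))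

theorem posDef_toeplitz_fracCentralCoef (hγ : γ ∈ Set.Ioo 0 2) (n : ℕ) :
    (toeplitz (fracCentralCoef γ) n).PosDef :=
  posDef_toeplitz_of_nonpos_of_sum_pos (even_fracCentralCoef γ)
    (fun _ hk => (fracCentralCoef_neg_of_ne_zero hγ hk).le)
    fun _ hi => sum_range_fracCentralCoef_pos hγ hi

end FracCentralCoef

theorem add_two_mul_int_ne_zero {γ : ℝ} (hγ : γ ∈ Set.Ioo 0 2) (m : ℤ) : γ + 2 * m ≠ 0 := by
  intro h
  have hlower : (-1 : ℝ) < m := by linarith [hγ.2]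
  have hupper : (m : ℝ) < 0 := by linarith [hγ.1]
  norm_cast at hlower hupper
  omega

theorem Amat_eq_toeplitz_add {γ : ℝ} (hγ : γ ∈ Set.Ioo 0 2) (N : ℕ) :
    Amat γ N = toeplitz (fracCentralCoef γ) N +
      (γ / 24) • toeplitz (negSecondDiff (fracCentralCoef γ)) N := by
  ext i j
  refine sCoef_eq_fracCentralCoef_add ?_ ?_
  · convert add_two_mul_int_ne_zero hγ ((i : ℤ) - j + 1) using 1
    push_cast
    ring
  · convert add_two_mul_int_ne_zero hγ (1 - ((i : ℤ) - j)) using 1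
    push_cast
    ring

theorem posDef_Amat {γ : ℝ} (hγ : γ ∈ Set.Ioo 0 2) (N : ℕ) : (Amat γ N).PosDef := by
  have hcorr : (toeplitz (negSecondDiff (fracCentralCoef γ)) N).PosSemidef :=
    posSemidef_toeplitz_negSecondDiff (posDef_toeplitz_fracCentralCoef hγ (N + 1)).posSemidef
  rw [Amat_eq_toeplitz_add hγ]
  exact (posDef_toeplitz_fracCentralCoef hγ N).add_posSemidef
    (hcorr.smul (div_nonneg hγ.1.le (by norm_num)))

theorem stmt_10_general (α β : ℝ) (hα : α ∈ Set.Ioo (0 : ℝ) 2) (hβ : β ∈ Set.Ioo (0 : ℝ) 2)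
    (Nx Ny : ℕ) (ηα ηβ : ℝ) (hηα : 0 < ηα) (hηβ : 0 < ηβ) :
    ∀ J : Matrix (Fin Ny × Fin Nx) (Fin Ny × Fin Nx) ℝ,
      J = ηα • ((1 : Matrix (Fin Ny) (Fin Ny) ℝ) ⊗ₖ Amat α Nx) +
            ηβ • (Amat β Ny ⊗ₖ (1 : Matrix (Fin Nx) (Fin Nx) ℝ)) →
      J.IsSymm ∧ J.PosDef := by
  rintro J rfl
  have hJ := posDef_smul_one_kronecker_add_smul_kronecker_one (posDef_Amat hα Nx)
    (posDef_Amat hβ Ny) hηα hηβ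
  exact ⟨Matrix.isHermitian_iff_isSymm.mp hJ.isHermitian, hJ⟩

theorem stmt_10 (α β : ℝ) (hα : α ∈ Set.Ioo (1 : ℝ) 2) (hβ : β ∈ Set.Ioo (1 : ℝ) 2)
    (Nx Ny : ℕ) (hNx : 1 ≤ Nx) (hNy : 1 ≤ Ny)
    (ηα ηβ : ℝ) (hηα : 0 < ηα) (hηβ : 0 < ηβ) :
    ∀ J : Matrix (Fin Ny × Fin Nx) (Fin Ny × Fin Nx) ℝ,
      J = ηα • ((1 : Matrix (Fin Ny) (Fin Ny) ℝ) ⊗ₖ Amat α Nx) +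
            ηβ • (Amat β Ny ⊗ₖ (1 : Matrix (Fin Nx) (Fin Nx) ℝ)) →
      J.IsSymm ∧ J.PosDef :=
  stmt_10_general α β (Set.Ioo_subset_Ioo_left zero_le_one hα)
    (Set.Ioo_subset_Ioo_left zero_le_one hβ) Nx Ny ηα ηβ hηα hηβ
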